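/- For every integer k ≥ 2 one has der(z_k) = 𝒟(z_k ⧢ z₂ − z_k * z₂) = (2k−1)·z_{k+2} − Σ_{j=2}^{k} (k+j−1)·z_{k−j+2} z_j − z₂ z_k. -/

import Mathlib

/-!
Since `z_k ⧢ z₂ − z_k * z₂` is a combination of words of depth at most two, it suffices to
know `𝒟` on the words `z_m`, `z_a z_b` (`a, b ≥ 2`) and `z_a z_1`, that is, to know `𝔇` on the
tuples `(m, 1)`, `(m, 1, p, 1)` and `(m, 2)`.

* Enumerating the admissible sets `A`, `B` in the recursion turns it into an explicit recursion
  with at most four terms for each of these shapes (`Dfuel_1_1` to `Dfuel_1_1_1_1`). By induction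
  `𝒟` fixes `z_m` and `z_a z_b` for `a, b ≥ 2` (`D1`, `D3`), while
  `𝒟(z_{m+2} z_1) = z_{m+3} − Σ_{j<m} z_{j+2} z_{m−j+1}` (`D2`).
* On the other side
  `z_k ⧢ z₂ = z_k z₂ + Σ_{j<k} (j+1) z_{j+2} z_{k−j} + k z_{k+1} z_1` (`shmulW_two`) and
  `z_k * z₂ = z_k z₂ + z₂ z_k + z_{k+2}` (`hmulW_two`).

In the shuffle product, `z_{k+1} z_1` has total coefficient `2k`. Applying `𝒟`, the words
`z_{k+2−b} z_b` with `2 ≤ b ≤ k` get the coefficient `(k+1−b) − 2k = −(k+b−1)`, and `z_{k+2}` gets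
`2k − 1`.
-/

open scoped Classical BigOperators

noncomputable section

/-- The underlying space of `𝔥¹ = ℚ⟨z₁, z₂, …⟩`: formal ℚ-linear combinations of words,
a word being encoded by the list of subscripts `[k₁, …, k_r]` of `z_{k₁} ⋯ z_{k_r}`. -/
abbrev H : Type := List ℕ →₀ ℚ

/-- The space of ℚ-linear combinations of words in the two letters `x` (= `false`)
and `y` (= `true`). -/
abbrev Bw : Type := List Bool →₀ ℚ

/-- The word `z_{k₁} ⋯ z_{k_r}` as an element of `H`. -/
def zw (l : List ℕ) : H := Finsupp.single l 1

/-- Membership in `𝔥¹` (all subscripts ≥ 1). -/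
def isH1 (w : H) : Prop := ∀ l ∈ w.support, ∀ k ∈ l, 1 ≤ k

/-- Membership in `𝔥^{≥2}` (all subscripts ≥ 2). -/
def isH2 (w : H) : Prop := ∀ l ∈ w.support, ∀ k ∈ l, 2 ≤ k

/-- Membership in `𝔥⁰` (first subscript ≥ 2, all others ≥ 1). -/
def isH0 (w : H) : Prop :=
  ∀ l ∈ w.support, (∀ k ∈ l, 1 ≤ k) ∧ ∀ k, l.head? = some k → 2 ≤ k

/-- The harmonic product on words. -/
def hmulW : List ℕ → List ℕ → H
  | [], v => Finsupp.single v 1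
  | k :: u, [] => Finsupp.single (k :: u) 1
  | k :: u, l :: v =>
      Finsupp.mapDomain (k :: ·) (hmulW u (l :: v)) +
      Finsupp.mapDomain (l :: ·) (hmulW (k :: u) v) +
      Finsupp.mapDomain ((k + l) :: ·) (hmulW u v)
  termination_by u v => u.length + v.length

/-- The harmonic product `*` on `𝔥¹`. -/
def hmul (u v : H) : H := u.sum fun a ca => v.sum fun b cb => (ca * cb) • hmulW a b

/-- The shuffle product on words in the letters `x, y`. -/
def shW : List Bool → List Bool → Bw
  | [], v => Finsupp.single v 1
  | a :: u, [] => Finsupp.single (a :: u) 1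
  | a :: u, b :: v =>
      Finsupp.mapDomain (a :: ·) (shW u (b :: v)) +
      Finsupp.mapDomain (b :: ·) (shW (a :: u) v)
  termination_by u v => u.length + v.length

/-- The identification `z_k = x^{k-1} y`. -/
def toXY (l : List ℕ) : List Bool :=
  (l.map fun k => List.replicate (k - 1) false ++ [true]).flatten

def fromXYAux : List Bool → ℕ → List ℕ
  | [], _ => []
  | false :: t, c => fromXYAux t (c + 1)
  | true :: t, c => (c + 1) :: fromXYAux t 0

/-- Parse a word in `x, y` (ending in `y`) back into a word `z_{k₁} ⋯ z_{k_r}`. -/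
def fromXY (l : List Bool) : List ℕ := fromXYAux l 0

def shmulW (a b : List ℕ) : H := Finsupp.mapDomain fromXY (shW (toXY a) (toXY b))

/-- The shuffle product `⧢` on `𝔥¹` (via the identification `z_k = x^{k-1}y`). -/
def shmul (u v : H) : H := u.sum fun a ca => v.sum fun b cb => (ca * cb) • shmulW a b

/-- `φ(w) = w * z₂ − w ⧢ z₂`. -/
def phi (w : H) : H := hmul w (zw [2]) - shmul w (zw [2])

/-- `R(u,v) = φ(u*v) − φ(u)*v − u*φ(v)`. -/
def Rop (u v : H) : H := phi (hmul u v) - hmul (phi u) v - hmul u (phi v)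

/-- The weight operator `W`. -/
def Wop (w : H) : H := w.sum fun a c => Finsupp.single a (c * (a.sum : ℚ))

/-- `Σ_{w = u'(p)u''} u' y u''`: replace one occurrence of the factor `p` by `y`. -/
def replaceOcc (p : List Bool) : List Bool → Bw
  | [] => 0
  | a :: t =>
      (if p.isPrefixOf (a :: t) then Finsupp.single (true :: (a :: t).drop p.length) 1 else 0) +
      Finsupp.mapDomain (a :: ·) (replaceOcc p t)

/-- The map `δ` on words in the letters `x, y`. -/
def deltaB (l : List Bool) : Bw :=
  (if l.take 2 = [true, false] then (1/2 : ℚ) • Finsupp.single (l.drop 2) 1 else 0) -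
  (if l.take 2 = [false, true] then (1/2 : ℚ) • Finsupp.single (l.drop 2) 1 else 0) +
  (if l.take 2 = [true, true] then (1/4 : ℚ) • Finsupp.single (l.drop 2) 1 else 0) +
  (1/2 : ℚ) • (replaceOcc [true, true, false] l - replaceOcc [false, true, true] l)

/-- The map `δ : 𝔥¹ → 𝔥¹`. -/
def deltaH (w : H) : H := w.sum fun a c => c • Finsupp.mapDomain fromXY (deltaB (toXY a))

/-- The recursively defined map `𝔇` on tuples, with an explicit fuel parameter.
(The fuel `c.sum + 1` is always sufficient, since the total sum of the entries strictly
decreases in each recursive call.) -/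
def Dfuel : ℕ → List ℕ → Bw
  | _, [] => Finsupp.single [] 1
  | 0, _ :: _ => 0
  | fuel + 1, k :: t =>
      let c := k :: t
      let n := c.length
      let ones : Finset ℕ := (Finset.Icc 1 n).filter fun i => c.getD (i - 1) 0 = 1
      let bigs : Finset ℕ := (Finset.Icc 1 n).filter fun i => 1 < c.getD (i - 1) 0
      let evenOdd : Finset ℕ → Prop := fun A =>
        ∀ i ∈ A, (Even i → i + 1 ∈ A) ∧ (Odd i → i - 1 ∈ A)
      let oddEven : Finset ℕ → Prop := fun A =>
        ∀ i ∈ A, (Odd i → i + 1 ∈ A) ∧ (Even i → i - 1 ∈ A)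
      let noEvenPair : Finset ℕ → Prop := fun B' =>
        ∀ l : ℕ, 1 ≤ l → ¬(2 * l ∈ B' ∧ 2 * l + 1 ∈ B')
      let noOddPair : Finset ℕ → Prop := fun B' =>
        ∀ l : ℕ, 1 ≤ l → ¬(2 * l - 1 ∈ B' ∧ 2 * l ∈ B')
      let newc : Finset ℕ → Finset ℕ → List ℕ := fun A B' =>
        (List.range n).filterMap fun j =>
          if j + 1 ∈ A then none
          else some (c.getD j 0 - if j + 1 ∈ B' then 1 else 0)
      (∑ A ∈ ones.powerset.filter evenOdd,
        ∑ B' ∈ bigs.powerset.filter (fun B' => 1 ≤ A.card + B'.card ∧ noEvenPair B'),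
          ((-1 : ℚ) ^ (B'.card + 1)) •
            Finsupp.mapDomain (fun w => List.replicate (A.card + B'.card) false ++ w)
              (Dfuel fuel (newc A B'))) +
      (∑ A ∈ ones.powerset.filter evenOdd,
        ∑ B' ∈ bigs.powerset.filter (fun B' => 2 ≤ A.card + B'.card ∧ noEvenPair B'),
          ((-1 : ℚ) ^ (B'.card + 1)) •
            Finsupp.mapDomain
              (fun w => List.replicate (A.card + B'.card - 1) false ++ true :: w)
              (Dfuel fuel (newc A B'))) +
      (∑ A ∈ ones.powerset.filter oddEven,
        ∑ B' ∈ bigs.powerset.filter (fun B' => 2 ≤ A.card + B'.card ∧ noOddPair B'),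
          ((-1 : ℚ) ^ B'.card) •
            Finsupp.mapDomain
              (fun w => List.replicate (A.card + B'.card - 1) false ++ true :: w)
              (Dfuel fuel (newc A B')))

/-- The map `𝔇` on tuples of positive integers. -/
def DropD (c : List ℕ) : Bw := Dfuel (c.sum + 1) c

/-- Run-length encoding of a word in `x, y`: the exponents `(c₁, …, c_{2s})` of
`x^{c₁} y^{c₂} ⋯ x^{c_{2s-1}} y^{c_{2s}}`. -/
def rle : List Bool → List ℕ
  | [] => []
  | a :: t => ((t.takeWhile (· = a)).length + 1) :: rle (t.dropWhile (· = a))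
  termination_by l => l.length
  decreasing_by
    simp only [List.length_cons]
    exact Nat.lt_succ_of_le (List.Sublist.length_le (List.dropWhile_sublist _))

def Drop1W (a : List ℕ) : H := Finsupp.mapDomain fromXY (DropD (rle (toXY a)))

/-- The Drop1 operator `𝒟 : 𝔥⁰ → 𝔥^{≥2}` of Hirose–Maesaka–Seki–Watanabe. -/
def Drop1 (w : H) : H := w.sum fun a c => c • Drop1W a

/-- The map `der = −𝒟 ∘ φ`, i.e. `der(w) = 𝒟(w ⧢ z₂ − w * z₂)`. -/
def der (w : H) : H := Drop1 (shmul w (zw [2]) - hmul w (zw [2]))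

/-- The ideal `DR_*` of `(𝔥^{≥2}, *)` spanned by the `der^n(R(u,v)) * w`. -/
def DRstar : Submodule ℚ H :=
  Submodule.span ℚ {x | ∃ (n : ℕ) (u v w : H), isH2 u ∧ isH2 v ∧ isH2 w ∧
    x = hmul (der^[n] (Rop u v)) w}

/-- The lexicographic order `≻` on the lattice `ℤτ + ℤ`. -/
def lexGT (a b : ℤ × ℤ) : Prop := b.1 < a.1 ∨ (a.1 = b.1 ∧ b.2 < a.2)

/-- The lattice point `mτ + n`. -/
def lat (τ : ℂ) (p : ℤ × ℤ) : ℂ := p.1 * τ + p.2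

/-- The finite partial sum `S_{M,N}(k₁,…,k_r; τ)` of the multiple Eisenstein series. -/
def SMN (k : List ℕ) (M N : ℕ) (τ : ℂ) : ℂ :=
  ∑ f ∈ (Fintype.piFinset fun _ : Fin k.length =>
      (Finset.Ioo (-(M : ℤ)) (M : ℤ)) ×ˢ (Finset.Ioo (-(N : ℤ)) (N : ℤ))).filter
      (fun f => ∀ i : Fin k.length,
        lexGT (f i) (if h : (i : ℕ) + 1 < k.length then f ⟨(i : ℕ) + 1, h⟩ else (0, 0))),
    ∏ i : Fin k.length, (lat τ (f i)) ^ (-(k.get i : ℤ))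

/-- The finite partial sums of the `g`-part: only lattice points with positive
imaginary part. -/
def gSMN (k : List ℕ) (M N : ℕ) (τ : ℂ) : ℂ :=
  ∑ f ∈ (Fintype.piFinset fun _ : Fin k.length =>
      (Finset.Ioo (-(M : ℤ)) (M : ℤ)) ×ˢ (Finset.Ioo (-(N : ℤ)) (N : ℤ))).filter
      (fun f => (∀ i : Fin k.length,
        lexGT (f i) (if h : (i : ℕ) + 1 < k.length then f ⟨(i : ℕ) + 1, h⟩ else (0, 0))) ∧
        ∀ i : Fin k.length, 0 < (lat τ (f i)).im),
    ∏ i : Fin k.length, (lat τ (f i)) ^ (-(k.get i : ℤ))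

/-- The multiple zeta value `ζ(k₁,…,k_r)` as an (unconditional) sum. -/
def zetaValue (k : List ℕ) : ℂ :=
  ∑' n : Fin k.length → ℕ,
    if ∀ i : Fin k.length,
        (if h : (i : ℕ) + 1 < k.length then n ⟨(i : ℕ) + 1, h⟩ else 0) < n i then
      ∏ i : Fin k.length, (n i : ℂ) ^ (-(k.get i : ℤ))
    else 0

section Quasi

variable {R : Type*} [CommRing R] [Algebra ℚ R]

/-- `F_w(M) = Σ_{w = w₁⋯w_s} Σ_{M > m₁ > ⋯ > m_s > 0} f_{w₁}(m₁)⋯f_{w_s}(m_s)` on words. -/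
def Fword (f : ℕ → H →ₗ[ℚ] R) (M : ℕ) (l : List ℕ) : R :=
  if l = [] then 1
  else ∑ c : Composition l.length,
    ∑ m ∈ (Fintype.piFinset fun _ : Fin c.length => Finset.Ioo 0 M).filter
        (fun m => StrictAnti m),
      ∏ i : Fin c.length, f (m i) (zw ((l.splitWrtComposition c).getD (i : ℕ) []))

/-- The ℚ-linear extension of `Fword`. -/
def FL (f : ℕ → H →ₗ[ℚ] R) (M : ℕ) (w : H) : R := w.sum fun l c => c • Fword f M l

/-- `μ^{m₁,…,m_r} = 1/(r₁!⋯r_s!)` where `r₁,…,r_s` are the multiplicities of the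
distinct values of `m`. -/
def muCoeff {s : ℕ} (m : Fin s → ℕ) : ℚ :=
  (∏ v ∈ Finset.image m Finset.univ,
    ((Finset.univ.filter fun i => m i = v).card.factorial : ℚ))⁻¹

/-- `coF(M)` on words: supported on powers of `z₁`. -/
def coFword (a : ℕ → R) (M : ℕ) (l : List ℕ) : R :=
  if ∀ k ∈ l, k = 1 then
    (-1 : R) ^ l.length *
      ∑ m ∈ (Fintype.piFinset fun _ : Fin l.length => Finset.Ioo 0 M).filter
          (fun m => Antitone m),
        muCoeff m • ∏ i : Fin l.length, a (m i)
  else 0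

/-- The ℚ-linear extension of `coFword`. -/
def coFL (a : ℕ → R) (M : ℕ) (w : H) : R := w.sum fun l c => c • coFword a M l

/-- `F^*(M)`: the deconcatenation convolution of `coF(M)` and `F(M)` on words. -/
def FstarWord (f : ℕ → H →ₗ[ℚ] R) (M : ℕ) (l : List ℕ) : R :=
  ∑ i ∈ Finset.range (l.length + 1),
    coFword (fun m => f m (zw [1])) M (l.take i) * Fword f M (l.drop i)

/-- The ℚ-linear extension of `FstarWord`. -/
def FstarL (f : ℕ → H →ₗ[ℚ] R) (M : ℕ) (w : H) : R := w.sum fun l c => c • FstarWord f M l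

end Quasi

/-- Parse a word `b_{k₁}b₀^{m₁} ⋯ b_{k_r}b₀^{m_r}` (a list over ℕ, with `0` playing the
role of `b₀`) into the list of pairs `(k₁,m₁), …, (k_r,m_r)`. -/
def toPairs : List ℕ → List (ℕ × ℕ)
  | [] => []
  | k :: t => (k, (t.takeWhile (· = 0)).length) :: toPairs (t.dropWhile (· = 0))
  termination_by l => l.length
  decreasing_by
    simp only [List.length_cons]
    exact Nat.lt_succ_of_le (List.Sublist.length_le (List.dropWhile_sublist _))

def ofPairs (P : List (ℕ × ℕ)) : List ℕ :=
  (P.map fun p => p.1 :: List.replicate p.2 0).flatten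

/-- The involution `τ_b` on words of `ℚ⟨ℬ⟩⁰`. -/
def taubW (l : List ℕ) : List ℕ :=
  ofPairs (((toPairs l).map fun p => (p.2 + 1, p.1 - 1)).reverse)

/-- The ℚ-linear involution `τ_b` on `ℚ⟨ℬ⟩⁰`. -/
def taub (w : H) : H := w.sum fun a c => c • (Finsupp.single (taubW a) 1 : H)

/-- The balanced harmonic product `*_b` on words of `ℚ⟨ℬ⟩⁰`. -/
def hbW : List ℕ → List ℕ → H
  | [], v => Finsupp.single v 1
  | i :: u, [] => Finsupp.single (i :: u) 1
  | i :: u, j :: v =>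
      Finsupp.mapDomain (i :: ·) (hbW u (j :: v)) +
      Finsupp.mapDomain (j :: ·) (hbW (i :: u) v) +
      (if i ≠ 0 ∧ j ≠ 0 then Finsupp.mapDomain ((i + j) :: ·) (hbW u v) else 0)
  termination_by u v => u.length + v.length

/-- The balanced harmonic product `*_b`. -/
def hb (u v : H) : H := u.sum fun a ca => v.sum fun b cb => (ca * cb) • hbW a b

/-- The derivation `D` of `ℚ⟨ℬ⟩⁰`:
`D(b_{k₁}b₀^{m₁}⋯b_{k_r}b₀^{m_r}) = Σ_{1≤i≤j≤r} k_i(m_j+1)·(word with k_i, m_j increased)`. -/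
def Dbal (w : H) : H :=
  w.sum fun a c =>
    let P := toPairs a
    ∑ i ∈ Finset.range P.length, ∑ j ∈ Finset.Ico i P.length,
      (c * (P.getD i (0, 0)).1 * ((P.getD j (0, 0)).2 + 1)) •
        (Finsupp.single (ofPairs (P.mapIdx fun t p =>
          ((if t = i then p.1 + 1 else p.1), (if t = j then p.2 + 1 else p.2)))) 1 : H)

/-! ### The recursion for `𝔇` with explicit index sets -/

/-- The word `x^i`. -/
def xs (i : ℕ) : List Bool := List.replicate i false

/-- Left concatenation with the word `u`, as a linear map. -/
def pre (u : List Bool) : Bw →ₗ[ℚ] Bw := Finsupp.lmapDomain ℚ ℚ (u ++ ·)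

/-- The tuple `𝐜_{(−A)} − δ_B`; positions are counted from `1`. -/
def newT (c : List ℕ) (A B : Finset ℕ) : List ℕ :=
  (List.range c.length).filterMap fun j =>
    if j + 1 ∈ A then none
    else some (c.getD j 0 - if j + 1 ∈ B then 1 else 0)

/-- The set `A` is even–odd. -/
def EO (A : Finset ℕ) : Prop := ∀ i ∈ A, (Even i → i + 1 ∈ A) ∧ (Odd i → i - 1 ∈ A)
/-- The set `A` is odd–even. -/
def OE (A : Finset ℕ) : Prop := ∀ i ∈ A, (Odd i → i + 1 ∈ A) ∧ (Even i → i - 1 ∈ A)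
/-- The set `B` contains no pair `{2l, 2l+1}`. -/
def NE (B : Finset ℕ) : Prop := ∀ l : ℕ, 1 ≤ l → ¬(2 * l ∈ B ∧ 2 * l + 1 ∈ B)
/-- The set `B` contains no pair `{2l−1, 2l}`. -/
def NO (B : Finset ℕ) : Prop := ∀ l : ℕ, 1 ≤ l → ¬(2 * l - 1 ∈ B ∧ 2 * l ∈ B)

/-- The recursion for `𝔇`, with `O` the set of positions of entries `1` and `G` the set of
positions of entries `> 1`, and with the conditions on `A` and `B` moved inside the sums. -/
lemma Dfuel_succ (f : ℕ) (c : List ℕ) (hc : c ≠ []) (O G : Finset ℕ)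
    (hO : (Finset.Icc 1 c.length).filter (fun i => c.getD (i - 1) 0 = 1) = O)
    (hG : (Finset.Icc 1 c.length).filter (fun i => 1 < c.getD (i - 1) 0) = G) :
    Dfuel (f + 1) c =
      (∑ A ∈ O.powerset, if EO A then
        ∑ B ∈ G.powerset, if 1 ≤ A.card + B.card ∧ NE B then
          ((-1 : ℚ) ^ (B.card + 1)) • pre (xs (A.card + B.card)) (Dfuel f (newT c A B))
        else 0 else 0) +
      (∑ A ∈ O.powerset, if EO A then
        ∑ B ∈ G.powerset, if 2 ≤ A.card + B.card ∧ NE B then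
          ((-1 : ℚ) ^ (B.card + 1)) •
            pre (xs (A.card + B.card - 1) ++ [true]) (Dfuel f (newT c A B))
        else 0 else 0) +
      (∑ A ∈ O.powerset, if OE A then
        ∑ B ∈ G.powerset, if 2 ≤ A.card + B.card ∧ NO B then
          ((-1 : ℚ) ^ B.card) •
            pre (xs (A.card + B.card - 1) ++ [true]) (Dfuel f (newT c A B))
        else 0 else 0) := by
  subst hO hG
  obtain _ | ⟨k, t⟩ := c
  · exact absurd rfl hc
  rw [Dfuel]
  simp only [Finset.sum_filter, pre, xs, newT, EO, OE, NE, NO, Finsupp.lmapDomain_apply,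
    List.append_assoc, List.singleton_append]
  -- the two sides differ only in their decidability instances
  congr!
  ext : 2
  congr

/-! ### Explicit recursions for the tuples `(m, 1)`, `(m, 2)`, `(m, 1, p, 1)` -/

lemma odd3 : Odd 3 := by decide
lemma even3 : ¬ Even 3 := by decide
lemma odd4 : ¬ Odd 4 := by decide
lemma even4 : Even 4 := by decide

lemma pre_single (u w : List Bool) (q : ℚ) :
    pre u (Finsupp.single w q) = Finsupp.single (u ++ w) q := by
  simp [pre]

lemma filt2 (a b : ℕ) (p : ℕ → Prop) [DecidablePred p] :
   (Finset.Icc 1 [a,b].length).filter (fun i => p ([a,b].getD (i - 1) 0)) =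
    (if p a then {1} else ∅) ∪ (if p b then {2} else ∅) := by
  have : Finset.Icc 1 [a,b].length = {1,2} := rfl
  rw [this]; ext i; simp only [Finset.mem_filter, Finset.mem_insert, Finset.mem_singleton, Finset.mem_union]
  constructor
  · rintro ⟨rfl | rfl, h⟩ <;> simp_all
  · split_ifs <;> simp <;> rintro (rfl | rfl) <;> simp_all

lemma filt4 (a b c d : ℕ) (p : ℕ → Prop) [DecidablePred p] :
   (Finset.Icc 1 [a,b,c,d].length).filter (fun i => p ([a,b,c,d].getD (i - 1) 0)) =
    (if p a then {1} else ∅) ∪ (if p b then {2} else ∅) ∪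
      ((if p c then {3} else ∅) ∪ (if p d then {4} else ∅)) := by
  have : Finset.Icc 1 [a,b,c,d].length = {1,2,3,4} := rfl
  rw [this]; ext i
  simp only [Finset.mem_filter, Finset.mem_insert, Finset.mem_singleton, Finset.mem_union]
  constructor
  · rintro ⟨rfl | rfl | rfl | rfl, h⟩ <;> simp_all
  · rintro ((h | h) | (h | h)) <;> split_ifs at h <;> simp_all

lemma sum_pow1 (a : ℕ) (f : Finset ℕ → Bw) : ∑ A ∈ ({a} : Finset ℕ).powerset, f A = f ∅ + f {a} := by
  rw [show ({a} : Finset ℕ) = insert a ∅ from rfl, Finset.sum_powerset_insert (by simp)]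
  simp

lemma sum_pow2 (a b : ℕ) (h : a ≠ b) (f : Finset ℕ → Bw) :
    ∑ A ∈ ({a, b} : Finset ℕ).powerset, f A = f ∅ + f {b} + (f {a} + f {a, b}) := by
  rw [Finset.sum_powerset_insert (by simpa), sum_pow1, sum_pow1]
  simp

lemma sum_pow3 (a b c : ℕ) (h : a ∉ ({b, c} : Finset ℕ)) (h' : b ≠ c) (f : Finset ℕ → Bw) :
    ∑ A ∈ ({a, b, c} : Finset ℕ).powerset, f A = f ∅ + f {c} + (f {b} + f {b, c}) +
      (f {a} + f {a, c} + (f {a, b} + f {a, b, c})) := by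
  rw [Finset.sum_powerset_insert h, sum_pow2 _ _ h', sum_pow2 _ _ h']
  simp

lemma sum_pow4 (f : Finset ℕ → Bw) :
    ∑ A ∈ ({1, 2, 3, 4} : Finset ℕ).powerset, f A =
      f ∅ + f {4} + (f {3} + f {3, 4}) + (f {2} + f {2, 4} + (f {2, 3} + f {2, 3, 4})) +
      (f {1} + f {1, 4} + (f {1, 3} + f {1, 3, 4}) +
        (f {1, 2} + f {1, 2, 4} + (f {1, 2, 3} + f {1, 2, 3, 4}))) := by
  rw [Finset.sum_powerset_insert (by simp), sum_pow3 2 3 4 (by simp) (by simp),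
    sum_pow3 2 3 4 (by simp) (by simp)]
  simp

lemma NE_12 : NE {1, 2} := fun l _ hl => by simp at hl; omega
lemma NO_12 : ¬ NO {1, 2} := fun h => by simpa using h 1
lemma NE_1 : NE {1} := fun l _ hl => by simp at hl
lemma NE_2 : NE {2} := fun l _ hl => by simp at hl
lemma NE_3 : NE {3} := fun l _ hl => by simp at hl; omega
lemma NE_0 : NE ∅ := fun l _ hl => by simp at hl
lemma NO_0 : NO ∅ := fun l _ hl => by simp at hl
lemma NO_1 : NO {1} := fun l _ hl => by simp at hl
lemma NO_2 : NO {2} := fun l _ hl => by simp at hl; omega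
lemma NO_3 : NO {3} := fun l _ hl => by simp at hl; omega
lemma NE_13 : NE {1, 3} := fun l _ hl => by simp at hl; omega
lemma NO_13 : NO {1, 3} := fun l _ hl => by simp at hl; omega

lemma Dfuel_1_1 (f : ℕ) : Dfuel (f + 1) [1, 1] = pre [false, true] (Dfuel f []) := by
  rw [Dfuel_succ f _ (by simp) {1,2} ∅ (by rw [filt2 _ _ (· = 1)]; ext i; simp) (by rw [filt2 _ _ (1 < ·)]; ext i; simp)]
  simp only [Finset.powerset_empty, Finset.sum_singleton, sum_pow2 1 2 (by simp)]
  simp [EO, OE, NE, NO, xs, newT, List.range_succ]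

lemma Dfuel_m_1 (f m : ℕ) : Dfuel (f + 1) [m + 2, 1] = pre [false] (Dfuel f [m + 1, 1]) := by
  rw [Dfuel_succ f _ (by simp) {2} {1} (by rw [filt2 _ _ (· = 1)]; ext i; simp) (by rw [filt2 _ _ (1 < ·)]; ext i; simp)]
  simp only [sum_pow1]
  simp [EO, OE, NE_0, NE_1, NO_0, NO_1, xs, newT, List.range_succ, pow_succ]

lemma Dfuel_1_2 (f : ℕ) : Dfuel (f + 1) [1, 2] = pre [false] (Dfuel f [1, 1]) := by
  rw [Dfuel_succ f _ (by simp) {1} {2}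
    (by rw [filt2 _ _ (· = 1)]; ext i; simp)
    (by rw [filt2 _ _ (1 < ·)]; ext i; simp)]
  simp only [sum_pow1]
  simp [EO, OE, NE_0, NE_2, NO_0, NO_2, xs, newT, List.range_succ, pow_succ]

lemma Dfuel_m_2 (f m : ℕ) : Dfuel (f + 1) [m + 2, 2] =
    pre [false] (Dfuel f [m + 1, 2]) + pre [false] (Dfuel f [m + 2, 1])
      - pre [false, false] (Dfuel f [m + 1, 1]) - pre [false, true] (Dfuel f [m + 1, 1]) := by
  rw [Dfuel_succ f _ (by simp) ∅ {1, 2}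
    (by rw [filt2 _ _ (· = 1)]; ext i; simp)
    (by rw [filt2 _ _ (1 < ·)]; ext i; simp)]
  simp only [Finset.powerset_empty, Finset.sum_singleton, sum_pow2 1 2 (by simp)]
  simp [EO, OE, NE_0, NE_1, NE_2, NE_12, NO_0, NO_1, NO_2, NO_12, xs, newT, List.range_succ,
    pow_succ]
  abel

lemma Dfuel_m_1_p_1 (f m p : ℕ) : Dfuel (f + 1) [m + 2, 1, p + 2, 1] =
    pre [false] (Dfuel f [m + 1, 1, p + 2, 1]) + pre [false] (Dfuel f [m + 2, 1, p + 1, 1])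
      - pre [false, false] (Dfuel f [m + 1, 1, p + 1, 1]) := by
  rw [Dfuel_succ f _ (by simp) {2, 4} {1, 3}
    (by rw [filt4 _ _ _ _ (· = 1)]; ext i; simp)
    (by rw [filt4 _ _ _ _ (1 < ·)]; ext i; simp)]
  simp only [sum_pow2 1 3 (by simp), sum_pow2 2 4 (by simp)]
  simp [EO, OE, NE_0, NE_1, NE_3, NE_13, NO_0, NO_1, NO_3, NO_13, xs, newT, List.range_succ,
    odd4, even4, pow_succ]
  abel

lemma Dfuel_1_1_p_1 (f p : ℕ) : Dfuel (f + 1) [1, 1, p + 2, 1] =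
    pre [false] (Dfuel f [1, 1, p + 1, 1]) + pre [false, true] (Dfuel f [p + 2, 1])
      - pre [false, false, true] (Dfuel f [p + 1, 1]) := by
  rw [Dfuel_succ f _ (by simp) {1, 2, 4} {3}
    (by rw [filt4 _ _ _ _ (· = 1)]; ext i; simp)
    (by rw [filt4 _ _ _ _ (1 < ·)]; ext i; simp)]
  simp only [sum_pow1, sum_pow3 1 2 4 (by simp) (by simp)]
  simp [EO, OE, NE_0, NE_3, NO_0, NO_3, xs, newT, List.range_succ, odd4, even4, pow_succ]
  abel

lemma Dfuel_m_1_1_1 (f m : ℕ) : Dfuel (f + 1) [m + 2, 1, 1, 1] =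
    pre [false] (Dfuel f [m + 1, 1, 1, 1]) - pre [false, false] (Dfuel f [m + 2, 1])
      + pre [false, false, false] (Dfuel f [m + 1, 1]) := by
  rw [Dfuel_succ f _ (by simp) {2, 3, 4} {1}
    (by rw [filt4 _ _ _ _ (· = 1)]; ext i; simp; tauto)
    (by rw [filt4 _ _ _ _ (1 < ·)]; ext i; simp)]
  simp only [sum_pow1, sum_pow3 2 3 4 (by simp) (by simp)]
  simp [EO, OE, NE_0, NE_1, NO_0, NO_1, xs, newT, List.range_succ, odd3, even3, odd4, even4,
    pow_succ]
  abel

lemma Dfuel_1_1_1_1 (f : ℕ) : Dfuel (f + 1) [1, 1, 1, 1] =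
    pre [false, true] (Dfuel f [1, 1]) - pre [false, false] (Dfuel f [1, 1])
      + pre [false, false, false, true] (Dfuel f []) := by
  rw [Dfuel_succ f _ (by simp) {1, 2, 3, 4} ∅
    (by rw [filt4 _ _ _ _ (· = 1)]; ext i; simp; tauto)
    (by rw [filt4 _ _ _ _ (1 < ·)]; ext i; simp)]
  simp only [Finset.powerset_empty, Finset.sum_singleton, sum_pow4]
  simp [EO, OE, NE_0, NO_0, xs, newT, List.range_succ, odd3, even3, odd4, even4, pow_succ]
  abel

/-! ### Closed forms of `𝔇` -/

/-- The word `x^a y`. -/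
def e1 (a : ℕ) : Bw := Finsupp.single (xs a ++ [true]) 1

/-- The word `x^a y x^b y`. -/
def e2 (a b : ℕ) : Bw := Finsupp.single (xs a ++ true :: (xs b ++ [true])) 1

lemma pre_x_e1 (a : ℕ) : pre [false] (e1 a) = e1 (a + 1) := pre_single _ _ _
lemma pre_xx_e1 (a : ℕ) : pre [false, false] (e1 a) = e1 (a + 2) := pre_single _ _ _
lemma pre_xxx_e1 (a : ℕ) : pre [false, false, false] (e1 a) = e1 (a + 3) := pre_single _ _ _
lemma pre_y_e1 (a : ℕ) : pre [true] (e1 a) = e2 0 a := pre_single _ _ _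
lemma pre_xy_e1 (a : ℕ) : pre [false, true] (e1 a) = e2 1 a := pre_single _ _ _
lemma pre_xxy_e1 (a : ℕ) : pre [false, false, true] (e1 a) = e2 2 a := pre_single _ _ _
lemma pre_x_e2 (a b : ℕ) : pre [false] (e2 a b) = e2 (a + 1) b := pre_single _ _ _
lemma pre_xx_e2 (a b : ℕ) : pre [false, false] (e2 a b) = e2 (a + 2) b := pre_single _ _ _

lemma Dfuel_nil (f : ℕ) : Dfuel f [] = Finsupp.single [] 1 := by
  cases f <;> rfl

/-- `𝔇(m+1, 1) = x^{m+1} y`. -/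
lemma D1 (m f : ℕ) (h : m + 1 ≤ f) : Dfuel f [m + 1, 1] = e1 (m + 1) := by
  induction m generalizing f with
  | zero =>
    obtain ⟨f, rfl⟩ := Nat.exists_eq_succ_of_ne_zero (by omega : f ≠ 0)
    rw [Nat.succ_eq_add_one, zero_add, Dfuel_1_1, Dfuel_nil, pre_single]
    rfl
  | succ m ih =>
    obtain ⟨f, rfl⟩ := Nat.exists_eq_succ_of_ne_zero (by omega : f ≠ 0)
    rw [Nat.succ_eq_add_one, Dfuel_m_1, ih _ (by omega), pre_x_e1]

/-- `𝔇(m+1, 2) = x^{m+2} y − Σ_{j<m} x^{j+1} y x^{m−j} y`. -/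
lemma D2 (m f : ℕ) (h : m + 2 ≤ f) :
    Dfuel f [m + 1, 2] = e1 (m + 2) - ∑ j ∈ Finset.range m, e2 (j + 1) (m - j) := by
  induction m generalizing f with
  | zero =>
    obtain ⟨f, rfl⟩ := Nat.exists_eq_succ_of_ne_zero (by omega : f ≠ 0)
    rw [Nat.succ_eq_add_one, zero_add, Dfuel_1_2, D1 0 _ (by omega), pre_x_e1]
    simp
  | succ m ih =>
    obtain ⟨f, rfl⟩ := Nat.exists_eq_succ_of_ne_zero (by omega : f ≠ 0)
    rw [Nat.succ_eq_add_one, Dfuel_m_2, ih _ (by omega), D1 (m + 1) _ (by omega),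
      D1 m _ (by omega), Finset.sum_range_succ']
    simp only [map_sub, map_sum, pre_x_e1, pre_xx_e1, pre_xy_e1, pre_x_e2, Nat.add_sub_add_right,
      zero_add, Nat.sub_zero]
    abel

/-- `𝔇(m+1, 1, p+1, 1) = x^{m+1} y x^{p+1} y`. -/
lemma D3 (m p f : ℕ) (h : m + p + 2 ≤ f) :
    Dfuel f [m + 1, 1, p + 1, 1] = e2 (m + 1) (p + 1) := by
  induction f generalizing m p with
  | zero => omega
  | succ f ih =>
    obtain _ | m := m <;> obtain _ | p := p <;> try simp only [zero_add]
    · rw [Dfuel_1_1_1_1, D1 0 _ (by omega), Dfuel_nil, pre_xy_e1, pre_xx_e1, pre_single]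
      exact sub_add_cancel _ _
    · rw [Dfuel_1_1_p_1, ih 0 p (by omega), D1 (p + 1) _ (by omega), D1 p _ (by omega),
        pre_x_e2, pre_xy_e1, pre_xxy_e1]
      abel
    · rw [Dfuel_m_1_1_1, ih m 0 (by omega), D1 (m + 1) _ (by omega), D1 m _ (by omega),
        pre_x_e2, pre_xx_e1, pre_xxx_e1]
      abel
    · rw [Dfuel_m_1_p_1, ih m (p + 1) (by omega), ih (m + 1) p (by omega), ih m p (by omega),
        pre_x_e2, pre_x_e2, pre_xx_e2]
      abel

/-! ### The Drop1 operator on words of depth at most two -/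

lemma rle_x (m : ℕ) (w : List Bool) :
    rle (xs (m + 1) ++ true :: w) = (m + 1) :: rle (true :: w) := by
  have h1 : ∀ m, List.takeWhile (· = false) (xs m ++ true :: w) = xs m := by
    intro m; induction m <;> simp_all [xs, List.replicate_succ]
  have h2 : ∀ m, List.dropWhile (· = false) (xs m ++ true :: w) = true :: w := by
    intro m; induction m <;> simp_all [xs, List.replicate_succ]
  rw [show xs (m + 1) ++ true :: w = false :: (xs m ++ true :: w) from rfl, rle, h1, h2]
  simp [xs]

lemma rle_yx (w : List Bool) : rle (true :: false :: w) = 1 :: rle (false :: w) := by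
  rw [rle]; simp

lemma rle_y : rle [true] = [1] := by simp [rle]
lemma rle_yy : rle [true, true] = [2] := by simp [rle]

lemma fromXY_x (a : ℕ) (w : List Bool) : fromXY (xs a ++ true :: w) = (a + 1) :: fromXY w := by
  have h : ∀ a c, fromXYAux (xs a ++ true :: w) c = (a + c + 1) :: fromXYAux w 0 := by
    intro a
    induction a with
    | zero => intro c; simp [xs, fromXYAux]
    | succ a ih =>
      intro c
      rw [show xs (a + 1) ++ true :: w = false :: (xs a ++ true :: w) from rfl, fromXYAux, ih]
      congr 1; omega
  exact h a 0

lemma mapDomain_e1 (a : ℕ) : Finsupp.mapDomain fromXY (e1 a) = zw [a + 1] := by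
  rw [e1, Finsupp.mapDomain_single, fromXY_x]; rfl

lemma mapDomain_e2 (a b : ℕ) : Finsupp.mapDomain fromXY (e2 a b) = zw [a + 1, b + 1] := by
  rw [e2, Finsupp.mapDomain_single, fromXY_x, fromXY_x]; rfl

lemma Drop1W_one (m : ℕ) : Drop1W [m + 2] = zw [m + 2] := by
  have h : rle (toXY [m + 2]) = [m + 1, 1] := by
    rw [show toXY [m + 2] = xs (m + 1) ++ [true] by simp [toXY, xs], rle_x, rle_y]
  rw [Drop1W, h, DropD, D1 _ _ (by simp), mapDomain_e1]

lemma Drop1W_two (a b : ℕ) : Drop1W [a + 2, b + 2] = zw [a + 2, b + 2] := by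
  have h : rle (toXY [a + 2, b + 2]) = [a + 1, 1, b + 1, 1] := by
    rw [show toXY [a + 2, b + 2] = xs (a + 1) ++ true :: (xs (b + 1) ++ [true]) by
      simp [toXY, xs], rle_x,
      show true :: (xs (b + 1) ++ [true]) = true :: false :: (xs b ++ [true]) from rfl, rle_yx,
      show false :: (xs b ++ [true]) = xs (b + 1) ++ [true] from rfl, rle_x, rle_y]
  rw [Drop1W, h, DropD, D3 _ _ _ (by simp; omega), mapDomain_e2]

lemma Drop1W_two_one (m : ℕ) : Drop1W [m + 2, 1] =
    zw [m + 3] - ∑ j ∈ Finset.range m, zw [j + 2, m - j + 1] := by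
  have h : rle (toXY [m + 2, 1]) = [m + 1, 2] := by
    rw [show toXY [m + 2, 1] = xs (m + 1) ++ true :: [true] by simp [toXY, xs], rle_x, rle_yy]
  rw [Drop1W, h, DropD, D2 _ _ (by simp), ← Finsupp.lmapDomain_apply ℚ ℚ, map_sub, map_sum]
  simp only [Finsupp.lmapDomain_apply, mapDomain_e1, mapDomain_e2]

/-! ### The products `z_k ⧢ z₂` and `z_k * z₂` -/

lemma shW_cons (a b : Bool) (u v : List Bool) :
    shW (a :: u) (b :: v) = pre [a] (shW u (b :: v)) + pre [b] (shW (a :: u) v) := by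
  rw [shW]; rfl

lemma shW_nil_right (u : List Bool) : shW u [] = Finsupp.single u 1 := by
  cases u <;> simp [shW]

lemma shW_nil_left (u : List Bool) : shW [] u = Finsupp.single u 1 := by
  simp [shW]

lemma xs_succ (i : ℕ) (w : List Bool) : xs (i + 1) ++ w = false :: (xs i ++ w) := rfl

/-- `x^i y ⧢ y = Σ_{j≤i} x^j y x^{i−j} y + x^i y y`. -/
lemma shW_y (i : ℕ) : shW (xs i ++ [true]) [true] =
    ∑ j ∈ Finset.range (i + 1), e2 j (i - j) + e2 i 0 := by
  induction i with
  | zero =>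
    rw [show xs 0 ++ [true] = [true] from rfl, shW_cons, shW_nil_left, shW_nil_right,
      pre_single]
    simp [e2, xs]
  | succ i ih =>
    rw [xs_succ, shW_cons, ih, shW_nil_right, Finset.sum_range_succ' _ (i + 1), ← xs_succ]
    change _ + pre [true] (e1 (i + 1)) = _
    simp only [map_add, map_sum, pre_x_e2, pre_y_e1, Nat.add_sub_add_right, Nat.sub_zero]
    abel

/-- `x^i y ⧢ x y = x^i y x y + Σ_{j≤i} (j+1) x^{j+1} y x^{i−j} y + (i+1) x^{i+1} y y`. -/
lemma shW_xy (i : ℕ) : shW (xs i ++ [true]) [false, true] =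
    e2 i 1 + ∑ j ∈ Finset.range (i + 1), ((j : ℚ) + 1) • e2 (j + 1) (i - j) +
      ((i : ℚ) + 1) • e2 (i + 1) 0 := by
  induction i with
  | zero =>
    have h := shW_y 0
    rw [show xs 0 ++ [true] = [true] from rfl] at h ⊢
    rw [shW_cons, shW_nil_left, h, pre_single]
    simp [pre_x_e2]
    simp [e2, xs, add_assoc]
  | succ i ih =>
    rw [xs_succ, shW_cons, ih, ← xs_succ, shW_y, Finset.sum_range_succ' _ (i + 1),
      Finset.sum_range_succ' _ (i + 1)]
    simp only [map_add, map_sum, map_smul, pre_x_e2, Nat.add_sub_add_right, Nat.sub_zero,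
      Nat.cast_add, Nat.cast_one, add_smul, one_smul, Finset.sum_add_distrib, Nat.cast_zero,
      zero_smul]
    abel

lemma shmulW_two (i : ℕ) : shmulW [i + 1] [2] =
    zw [i + 1, 2] + ∑ j ∈ Finset.range (i + 1), ((j : ℚ) + 1) • zw [j + 2, i - j + 1] +
      ((i : ℚ) + 1) • zw [i + 2, 1] := by
  rw [shmulW, show toXY [i + 1] = xs i ++ [true] by simp [toXY, xs],
    show toXY [2] = [false, true] from rfl, shW_xy, ← Finsupp.lmapDomain_apply ℚ ℚ]
  simp only [map_add, map_sum, map_smul, Finsupp.lmapDomain_apply, mapDomain_e2]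

lemma hmulW_two (k : ℕ) : hmulW [k] [2] = zw [k, 2] + zw [2, k] + zw [k + 2] := by
  simp [hmulW, zw]

/-! ### The value of `der(z_k)` -/

/-- The operator `Drop1` as a linear map. -/
def Drop1L : H →ₗ[ℚ] H := Finsupp.linearCombination ℚ Drop1W

lemma Drop1_eq (w : H) : Drop1 w = Drop1L w := rfl

lemma Drop1L_zw (l : List ℕ) : Drop1L (zw l) = Drop1W l := by
  simp [Drop1L, zw]

lemma shmul_zw (a b : List ℕ) : shmul (zw a) (zw b) = shmulW a b := by
  simp [shmul, zw]

lemma hmul_zw (a b : List ℕ) : hmul (zw a) (zw b) = hmulW a b := by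
  simp [hmul, zw]

/-- Substituting `j ↦ n + 2 − j` in the sum of the statement for `k = n + 2`. -/
lemma sum_reindex (n : ℕ) :
    ∑ j ∈ Finset.Icc 2 (n + 2), ((n + 2 + j - 1 : ℕ) : ℚ) • zw [n + 2 - j + 2, j] =
      ∑ j ∈ Finset.range (n + 1), (2 * ((n : ℚ) + 2) - (j + 1)) • zw [j + 2, n - j + 2] := by
  refine Finset.sum_bij' (fun b _ => n + 2 - b) (fun j _ => n + 2 - j) ?_ ?_ ?_ ?_ ?_
  · intro b hb; simp at hb ⊢; omega
  · intro b hb; simp at hb ⊢; omega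
  · intro b hb; simp at hb ⊢; omega
  · intro b hb; simp at hb ⊢; omega
  · intro b hb
    simp only [Finset.mem_Icc] at hb
    rw [show n - (n + 2 - b) + 2 = b by omega, show n + 2 + b - 1 = n + 1 + b by omega,
      Nat.cast_sub hb.2]
    congr 1
    push_cast
    ring

/-- for `k ≥ 2`,
`der(z_k) = 𝒟(z_k ⧢ z₂ − z_k * z₂) = (2k−1)·z_{k+2} − Σ_{j=2}^{k} (k+j−1)·z_{k−j+2} z_j − z₂ z_k`. -/
theorem stmt10 (k : ℕ) (hk : 2 ≤ k) :
    der (zw [k]) = Drop1 (shmul (zw [k]) (zw [2]) - hmul (zw [k]) (zw [2])) ∧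
    der (zw [k]) =
      ((2 * k - 1 : ℕ) : ℚ) • zw [k + 2] -
      (∑ j ∈ Finset.Icc 2 k, ((k + j - 1 : ℕ) : ℚ) • zw [k - j + 2, j]) -
      zw [2, k] := by
  refine ⟨rfl, ?_⟩
  obtain ⟨n, rfl⟩ := Nat.exists_eq_add_of_le' hk
  rw [sum_reindex, der, shmul_zw, hmul_zw, hmulW_two, shmulW_two (n + 1), Drop1_eq,
    Finset.sum_range_succ]
  have hs : ∀ j ∈ Finset.range (n + 1), n + 1 - j + 1 = n - j + 2 := by
    intro j hj; simp at hj; omega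
  have hs1 : ∑ j ∈ Finset.range (n + 1), ((j : ℚ) + 1) • Drop1L (zw [j + 2, n + 1 - j + 1]) =
      ∑ j ∈ Finset.range (n + 1), ((j : ℚ) + 1) • zw [j + 2, n - j + 2] :=
    Finset.sum_congr rfl fun j hj => by rw [hs j hj, Drop1L_zw, Drop1W_two]
  have hs2 : ∑ j ∈ Finset.range (n + 1), zw [j + 2, n + 1 - j + 1] =
      ∑ j ∈ Finset.range (n + 1), zw [j + 2, n - j + 2] :=
    Finset.sum_congr rfl fun j hj => by rw [hs j hj]
  have h1 : Drop1L (zw [n + 1 + 2, 1]) = zw [n + 4] -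
      ∑ j ∈ Finset.range (n + 1), zw [j + 2, n - j + 2] := by
    rw [Drop1L_zw, Drop1W_two_one, hs2]
  have h2 (a b : ℕ) : Drop1L (zw [a + 2, b + 2]) = zw [a + 2, b + 2] := by
    rw [Drop1L_zw, Drop1W_two]
  have h3 : Drop1L (zw [n + 2 + 2]) = zw [n + 4] := by
    rw [Drop1L_zw, Drop1W_one]
  simp only [map_sub, map_add, map_sum, map_smul, hs1, Nat.sub_self, zero_add, h1, h2 0 n, h2 n 0,
    h3, sub_smul, Finset.sum_sub_distrib, ← Finset.smul_sum]
  have hc : ((2 * (n + 2) - 1 : ℕ) : ℚ) = 2 * (n + 2) - 1 := by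
    rw [Nat.cast_sub (by omega)]; push_cast; ring
  rw [hc]
  push_cast
  module
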